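/- Let T be a tree on n vertices with exactly q pendent vertices, where 2 < q < n − 1. Then T ⪰ SP_{n,q}, and r(T) = r(SP_{n,q}) if and only if T is isomorphic to SP_{n,q}. -/

import Mathlib

namespace TreeOrder

attribute [local instance] Classical.propDecidable

variable {V : Type*} {W : Type*}

/-- `side G u v` = number of vertices strictly closer to `u` than to `v`;
for an edge `uv` of a tree this is the order of the component of `T - uv` containing `u`. -/
noncomputable def side [Fintype V] (G : SimpleGraph V) (u v : V) : ℕ :=
  (Finset.univ.filter fun w => G.dist w u < G.dist w v).card

/-- `mu G u v = min (n_u(e), n_v(e))` for the edge `e = uv`. -/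
noncomputable def mu [Fintype V] (G : SimpleGraph V) (u v : V) : ℕ :=
  min (side G u v) (side G v u)

/-- `mu` as a function on unordered pairs. -/
noncomputable def muE [Fintype V] (G : SimpleGraph V) : Sym2 V → ℕ :=
  Sym2.lift ⟨fun u v => mu G u v, fun _ _ => min_comm _ _⟩

/-- `r G i` = number of edges `e` of `G` with `μ(e) = i`. -/
noncomputable def r [Fintype V] (G : SimpleGraph V) (i : ℕ) : ℕ :=
  (Finset.univ.filter fun e : Sym2 V => e ∈ G.edgeSet ∧ muE G e = i).card

/-- `tailSum G n k = Σ_{i=k}^{⌊n/2⌋} r_i(G)`. -/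
noncomputable def tailSum [Fintype V] (G : SimpleGraph V) (n k : ℕ) : ℕ :=
  ∑ i ∈ Finset.Icc k (n / 2), r G i

/-- The order `⪯` on trees with `n` vertices, via edge division vectors. -/
def Preceq [Fintype V] [Fintype W] (n : ℕ) (G : SimpleGraph V) (H : SimpleGraph W) : Prop :=
  ∀ k, 1 ≤ k → k ≤ n / 2 → tailSum G n k ≤ tailSum H n k

/-- The strict order `≺`. -/
def Prec [Fintype V] [Fintype W] (n : ℕ) (G : SimpleGraph V) (H : SimpleGraph W) : Prop :=
  Preceq n G H ∧ ∃ k, 1 ≤ k ∧ k ≤ n / 2 ∧ tailSum G n k < tailSum H n k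

/-- Equality of edge division vectors `r(G) = r(H)`. -/
def SameEdgeDivision [Fintype V] [Fintype W] (n : ℕ) (G : SimpleGraph V)
    (H : SimpleGraph W) : Prop :=
  ∀ i, 1 ≤ i → i ≤ n / 2 → r G i = r H i

/-- `u` is a centroidal vertex: `n_u(e) ≥ n/2` for every edge `e` incident to `u`. -/
def IsCentroidal [Fintype V] (G : SimpleGraph V) (u : V) : Prop :=
  ∀ v, G.Adj u v → Fintype.card V ≤ 2 * side G u v

/-- `u` is a proper centroidal vertex: `n_u(e) > ⌈n/2⌉` for every edge `e` incident to `u`. -/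
def IsProperCentroidal [Fintype V] (G : SimpleGraph V) (u : V) : Prop :=
  ∀ v, G.Adj u v → (Fintype.card V + 1) / 2 < side G u v

/-- The edge `uv` is a center edge: `μ(uv) = ⌊n/2⌋`. -/
def IsCenterEdge [Fintype V] (G : SimpleGraph V) (u v : V) : Prop :=
  G.Adj u v ∧ mu G u v = Fintype.card V / 2

/-- degree of a vertex -/
noncomputable def deg [Fintype V] (G : SimpleGraph V) (v : V) : ℕ :=
  (Finset.univ.filter fun w => G.Adj v w).card

/-- The path `P_n` on `n` vertices. -/
def pathG (n : ℕ) : SimpleGraph (Fin n) :=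
  SimpleGraph.fromRel fun x y => (x : ℕ) + 1 = y

/-- The star `S_n` on `n` vertices. -/
def starG (n : ℕ) : SimpleGraph (Fin n) :=
  SimpleGraph.fromRel fun x _ => (x : ℕ) = 0

/-- The double star path `CP_{n;a,b}` : a path on `n - a - b` vertices (at positions
`a, …, n - b - 1`) with `a` pendent vertices attached to its first vertex and `b`
pendent vertices attached to its last vertex. -/
def doubleStar (n a b : ℕ) : SimpleGraph (Fin n) :=
  SimpleGraph.fromRel fun x y =>
    ((x : ℕ) < a ∧ (y : ℕ) = a) ∨
    (a ≤ (x : ℕ) ∧ (x : ℕ) + 1 = y ∧ (y : ℕ) < n - b) ∨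
    ((x : ℕ) = n - b - 1 ∧ n - b ≤ (y : ℕ))

/-- `CP_{n,k}^s` : a path `v_1 ⋯ v_k` (at positions `0, …, k-1`) with all
`n - k` pendent vertices attached to `v_s` (position `s - 1`). -/
def cpOne (n k s : ℕ) : SimpleGraph (Fin n) :=
  SimpleGraph.fromRel fun x y =>
    ((x : ℕ) + 1 = y ∧ (y : ℕ) < k) ∨ ((x : ℕ) = s - 1 ∧ k ≤ (y : ℕ))

/-- The caterpillar `CP(n; n_1, …, n_k)` : a path `v_1 ⋯ v_k` (at positions `0, …, k-1`),
where pendent vertex `j` (for `k ≤ j < n`) is attached to the path vertex at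
position `f j` (so `n_i = |{j : f j = i - 1}|`). -/
def caterpillar (n k : ℕ) (f : ℕ → ℕ) : SimpleGraph (Fin n) :=
  SimpleGraph.fromRel fun x y =>
    ((x : ℕ) + 1 = y ∧ (y : ℕ) < k) ∨ (k ≤ (y : ℕ) ∧ (x : ℕ) = f y)

/-- The balanced starlike tree `SP_{n,q}` : the center is vertex `0`, and vertex
`j ≥ 1` lies on branch `(j - 1) % q` at depth `(j - 1)/q + 1`; so the `q` branches are
paths whose orders pairwise differ by at most `1`. -/
def balancedStar (n q : ℕ) : SimpleGraph (Fin n) :=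
  SimpleGraph.fromRel fun x y =>
    ((x : ℕ) = 0 ∧ 1 ≤ (y : ℕ) ∧ (y : ℕ) ≤ q) ∨ (1 ≤ (x : ℕ) ∧ (x : ℕ) + q = y)

/-- The edge-moving transformation of `G` w.r.t. the edge `uv`: contract `uv` to `u`
(moving all edges at `v` to `u`) and attach `v` to `u` as a pendent vertex. -/
def edgeMove (G : SimpleGraph V) (u v : V) : SimpleGraph V :=
  SimpleGraph.fromRel fun x y =>
    (G.Adj x y ∧ x ≠ v ∧ y ≠ v) ∨ (x = u ∧ y = v) ∨ (x = u ∧ G.Adj v y ∧ y ≠ u)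

/-! Root the tree at a centroid `c`. The edge from a non-root vertex `v` to its parent has the
descendants of `v` on its smaller side, so `r_i` counts the non-root vertices with exactly `i`
descendants, and the tail sum from `m + 1` on is `n - 1` minus the number of non-root vertices with
at most `m` descendants. Such a vertex lies fewer than `m` steps above some leaf, so there are at
most `q * m` of them; for the balanced starlike tree there are exactly `min (n - 1) (q * m)`.

If all tail sums agree, take `m = ⌊(n - 1) / q⌋`. Then the chains formed by a leaf and the `m - 1`
vertices above it are pairwise disjoint, and no non-root vertex has more than `m + 1` descendants;
this rules out branching away from `c`. A tree that branches only at `c` is determined by the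
lengths of its branches, hence by its edge division vector. -/

section

open Finset

/-! ### Trees and graph isomorphisms -/

section Graph

variable {G : SimpleGraph V} {H : SimpleGraph W}

theorem dist_lt_dist_of_forall_adj_eq (hG : G.Connected) {S : Set V} {a b x : V}
    (hS : ∀ u ∈ S, ∀ v ∉ S, G.Adj u v → u = a) (hx : x ∈ S) (hb : b ∉ S) :
    G.dist x a < G.dist x b := by
  obtain ⟨w, hw⟩ := hG.exists_walk_length_eq_dist x b
  obtain ⟨d, hd, hfst, hsnd⟩ := w.exists_boundary_dart S hx hb
  obtain rfl := hS _ hfst _ hsnd d.adj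
  have hmem := w.dart_fst_mem_support_of_mem_darts hd
  calc G.dist x d.fst ≤ (w.takeUntil d.fst hmem).length := SimpleGraph.dist_le _
    _ < w.length := SimpleGraph.Walk.length_takeUntil_lt_length hmem fun h => hb (h ▸ hfst)
    _ = G.dist x b := hw

theorem dist_map_iso (φ : G ≃g H) (u v : V) : H.dist (φ u) (φ v) = G.dist u v := by
  rw [SimpleGraph.dist_eq_sInf, SimpleGraph.dist_eq_sInf]
  congr 1
  ext k
  constructor
  · rintro ⟨w, rfl⟩
    exact ⟨(w.map φ.symm.toHom).copy (φ.symm_apply_apply u) (φ.symm_apply_apply v), by simp⟩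
  · rintro ⟨w, rfl⟩
    exact ⟨w.map φ.toHom, w.length_map _⟩

variable [Fintype V]

theorem side_map_iso [Fintype W] (φ : G ≃g H) (u v : V) :
    side H (φ u) (φ v) = side G u v :=
  (card_equiv φ.toEquiv fun w => by simp [dist_map_iso]).symm

theorem muE_map_iso [Fintype W] (φ : G ≃g H) (e : Sym2 V) : muE H (e.map φ) = muE G e := by
  induction e with
  | _ u v => exact congrArg₂ min (side_map_iso φ u v) (side_map_iso φ v u)

theorem r_eq_of_iso [Fintype W] (φ : G ≃g H) (i : ℕ) : r G i = r H i := by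
  have hedge (e : Sym2 V) : e.map φ ∈ H.edgeSet ↔ e ∈ G.edgeSet := by
    induction e with
    | _ u v => exact φ.map_adj_iff
  refine card_nbij' (Sym2.map φ) (Sym2.map φ.symm) ?_ ?_ ?_ ?_
  · intro e he
    simpa [hedge, muE_map_iso] using he
  · intro e he
    obtain ⟨e, rfl⟩ : ∃ e', Sym2.map φ e' = e := ⟨e.map φ.symm, by simp [Sym2.map_map]⟩
    simpa [Sym2.map_map, hedge, muE_map_iso] using he
  · intro e _
    simp [Sym2.map_map]
  · intro e _
    simp [Sym2.map_map]

theorem side_add_side_of_isTree (hG : G.IsTree) {u v : V} (huv : G.Adj u v) :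
    side G u v + side G v u = Fintype.card V := by
  have hcompl : ∀ w, G.dist w v < G.dist w u ↔ ¬ G.dist w u < G.dist w v := fun w => by
    have := hG.dist_ne_of_adj w huv
    omega
  simp only [side, hcompl]
  rw [card_filter_add_card_filter_not, card_univ]

theorem sum_dist_add_side_of_isTree (hG : G.IsTree) {u v : V} (huv : G.Adj u v) :
    ∑ w, G.dist w u + side G u v = ∑ w, G.dist w v + side G v u := by
  simp only [side, card_filter, ← sum_add_distrib]
  refine sum_congr rfl fun w _ => ?_
  have := hG.dist_eq_dist_add_one_of_adj w huv
  split_ifs <;> omega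

-- A vertex minimising the sum of the distances to all vertices is centroidal.
theorem exists_isCentroidal (hG : G.IsTree) : ∃ c, IsCentroidal G c := by
  have := hG.connected.nonempty
  obtain ⟨c, hc⟩ := Finite.exists_min fun c => ∑ w, G.dist w c
  refine ⟨c, fun v hcv => ?_⟩
  have hmin := hc v
  have hsum := sum_dist_add_side_of_isTree hG hcv
  have hcard := side_add_side_of_isTree hG hcv
  omega

theorem two_le_card_filter_deg_eq_one_of_isTree [Nontrivial V] (hG : G.IsTree) :
    2 ≤ #{v | deg G v = 1} := by
  have hdeg (v : V) : deg G v = G.degree v := by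
    simp [deg, ← SimpleGraph.card_neighborFinset_eq_degree, SimpleGraph.neighborFinset_eq_filter]
  obtain ⟨u, v, huv, hu, hv⟩ := hG.exists_ne_and_degree_eq_one
  exact one_lt_card.2 ⟨u, by simp [hdeg, hu], v, by simp [hdeg, hv], huv⟩

end Graph

/-! ### Counting and matching finite sets -/

theorem card_filter_eq_add_card_filter_lt {α : Type*} (s : Finset α) (f : α → ℕ) (k : ℕ) :
    #{a ∈ s | f a = k} + #{a ∈ s | k < f a} = #{a ∈ s | k ≤ f a} := by
  rw [← card_union_of_disjoint (disjoint_filter.2 fun _ _ h => h.not_gt), ← filter_or]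
  simp only [le_iff_eq_or_lt, eq_comm]

theorem exists_equiv_of_card_filter_le_eq {α β : Type*} {s : Finset α} {t : Finset β}
    {f : α → ℕ} {g : β → ℕ} (h : ∀ k, #{a ∈ s | k ≤ f a} = #{b ∈ t | k ≤ g b}) :
    ∃ e : s ≃ t, ∀ a, g (e a) = f a := by
  have hfib (k : ℕ) : #{a ∈ s | f a = k} = #{b ∈ t | g b = k} := by
    have hf := card_filter_eq_add_card_filter_lt s f k
    have hg := card_filter_eq_add_card_filter_lt t g k
    have hlt : #{a ∈ s | k < f a} = #{b ∈ t | k < g b} := h (k + 1)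
    have := h k
    omega
  have hcard (k : ℕ) : Fintype.card {a : s // f a = k} = Fintype.card {b : t // g b = k} := by
    simp only [Fintype.card_subtype, univ_eq_attach, filter_attach (f · = k),
      filter_attach (g · = k), card_map, card_attach, hfib]
  have e (k : ℕ) : {a : s // f a = k} ≃ {b : t // g b = k} := Fintype.equivOfCardEq (hcard k)
  exact ⟨Equiv.ofFiberEquiv (f := fun a : s => f a) (g := fun b : t => g b) e,
    Equiv.ofFiberEquiv_map e⟩

theorem exists_equiv_of_surjective_of_eq_iff_eq {α β γ : Type*} {f : α → β} {g : α → γ}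
    (hf : f.Surjective) (hg : g.Surjective) (h : ∀ a b, f a = f b ↔ g a = g b) :
    ∃ e : β ≃ γ, ∀ a, e (f a) = g a := by
  have hmap (a : α) : g (Function.surjInv hf (f a)) = g a :=
    (h _ _).1 (Function.surjInv_eq hf (f a))
  refine ⟨Equiv.ofBijective (g ∘ Function.surjInv hf) ⟨fun b b' hbb' => ?_, fun c => ?_⟩, hmap⟩
  · simpa only [Function.surjInv_eq] using (h _ _).2 hbb'
  · obtain ⟨a, rfl⟩ := hg c
    exact ⟨f a, hmap a⟩

/-! ### Rooted trees -/

/-- `IsParentMap p c`: the map `p` sends every vertex of a tree rooted at `c` to its parent. The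
root is encoded as its own parent, so that the iterates of `p` climb to `c` and stay there. -/
structure IsParentMap (p : V → V) (c : V) : Prop where
  map_root : p c = c
  exists_iterate_eq_root (v : V) : ∃ k, p^[k] v = c

/-- The rooted tree described by a parent map `p`: every vertex is joined to its parent. -/
def parentGraph (p : V → V) : SimpleGraph V :=
  SimpleGraph.fromRel fun u v => p u = v

/-- The distance from `v` to the root `c` of a rooted tree, counted along the parent map `p`. -/
noncomputable def depth (p : V → V) (c v : V) : ℕ :=
  sInf {k | p^[k] v = c}

/-- The set of descendants of `v` in a rooted tree, with `v` counted among them. -/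
noncomputable def descendants [Fintype V] (p : V → V) (v : V) : Finset V :=
  {w | ∃ k, p^[k] w = v}

/-- The non-root vertices with exactly `i` descendants; `level p c 1` consists of the leaves. -/
noncomputable def level [Fintype V] (p : V → V) (c : V) (i : ℕ) : Finset V :=
  {v ∈ {c}ᶜ | #(descendants p v) = i}

/-- The non-root vertices with at least `k` descendants; they count the edges `e` with
`k ≤ μ(e)` when the root is centroidal. -/
noncomputable def heavy [Fintype V] (p : V → V) (c : V) (k : ℕ) : Finset V :=
  {v ∈ {c}ᶜ | k ≤ #(descendants p v)}

/-- The non-root vertices with at most `m` descendants, that is, those outside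
`heavy p c (m + 1)`. -/
noncomputable def light [Fintype V] (p : V → V) (c : V) (m : ℕ) : Finset V :=
  {v ∈ {c}ᶜ | #(descendants p v) ≤ m}

/-- A rooted tree is starlike if no vertex other than the root has two children; the root itself
is exempt because `p v = c` is excluded. -/
def IsStarlike (p : V → V) (c : V) : Prop :=
  Set.InjOn p {v | p v ≠ c}

section Counting

variable [Fintype V] {p : V → V} {c u v : V} {i k m : ℕ}

@[simp]
theorem mem_descendants : u ∈ descendants p v ↔ ∃ k, p^[k] u = v := by
  simp [descendants]

theorem self_mem_descendants (p : V → V) (v : V) : v ∈ descendants p v :=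
  mem_descendants.2 ⟨0, rfl⟩

theorem card_descendants_pos (p : V → V) (v : V) : 0 < #(descendants p v) :=
  card_pos.2 ⟨v, self_mem_descendants p v⟩

theorem descendants_subset_descendants (h : u ∈ descendants p v) :
    descendants p u ⊆ descendants p v := by
  obtain ⟨k, rfl⟩ := mem_descendants.1 h
  intro w hw
  obtain ⟨j, rfl⟩ := mem_descendants.1 hw
  exact mem_descendants.2 ⟨k + j, Function.iterate_add_apply p k j w⟩

@[simp]
theorem mem_level : v ∈ level p c i ↔ v ≠ c ∧ #(descendants p v) = i := by
  simp [level]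

@[simp]
theorem mem_heavy : v ∈ heavy p c k ↔ v ≠ c ∧ k ≤ #(descendants p v) := by
  simp [heavy]

@[simp]
theorem mem_light : v ∈ light p c m ↔ v ≠ c ∧ #(descendants p v) ≤ m := by
  simp [light]

theorem card_level_add_card_heavy (p : V → V) (c : V) (k : ℕ) :
    #(level p c k) + #(heavy p c (k + 1)) = #(heavy p c k) :=
  card_filter_eq_add_card_filter_lt _ _ k

theorem card_heavy_add_card_light (p : V → V) (c : V) (m : ℕ) :
    #(heavy p c (m + 1)) + #(light p c m) = Fintype.card V - 1 := by
  have hlight : light p c m = ({c}ᶜ : Finset V).filter fun v => ¬ m + 1 ≤ #(descendants p v) :=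
    filter_congr fun v _ => by omega
  rw [heavy, hlight, card_filter_add_card_filter_not, card_compl, card_singleton]

end Counting

namespace IsParentMap

variable {p : V → V} {c u v w : V} {j k m : ℕ}

theorem depth_le_iff (hp : IsParentMap p c) : depth p c v ≤ k ↔ p^[k] v = c := by
  refine ⟨fun h => ?_, fun h => Nat.sInf_le h⟩
  have hdepth : p^[depth p c v] v = c := Nat.sInf_mem (hp.exists_iterate_eq_root v)
  rw [← Nat.sub_add_cancel h, Function.iterate_add_apply, hdepth,
    Function.iterate_fixed hp.map_root]

theorem depth_iterate (hp : IsParentMap p c) (k : ℕ) (v : V) :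
    depth p c (p^[k] v) = depth p c v - k :=
  eq_of_forall_ge_iff fun m => by
    rw [tsub_le_iff_right, hp.depth_le_iff, hp.depth_le_iff, Function.iterate_add_apply]

theorem iterate_antisymm (hp : IsParentMap p c) (huv : p^[j] u = v) (hvu : p^[k] v = u) :
    u = v := by
  have hv := huv ▸ hp.depth_iterate j u
  have hu := hvu ▸ hp.depth_iterate k v
  obtain rfl | hj := j.eq_zero_or_pos
  · exact huv
  · rw [← Function.iterate_zero_apply p u, ← Function.iterate_zero_apply p v,
      hp.depth_le_iff.1 (by omega : depth p c u ≤ 0),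
      hp.depth_le_iff.1 (by omega : depth p c v ≤ 0)]

theorem map_ne_self (hp : IsParentMap p c) (hv : v ≠ c) : p v ≠ v := fun h => by
  obtain ⟨k, hk⟩ := hp.exists_iterate_eq_root v
  exact hv (Function.iterate_fixed h k ▸ hk)

theorem ne_root_of_iterate_ne_root (hp : IsParentMap p c) (h : p^[k] v ≠ c) : v ≠ c :=
  fun hv => h (hv ▸ Function.iterate_fixed hp.map_root k)

section Descendants

variable [Fintype V]

theorem map_notMem_descendants (hp : IsParentMap p c) (hv : v ≠ c) : p v ∉ descendants p v := by
  intro h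
  obtain ⟨k, hk⟩ := mem_descendants.1 h
  exact hp.map_ne_self hv (hp.iterate_antisymm hk (rfl : p^[1] v = p v))

theorem card_descendants_lt_of_mem (hp : IsParentMap p c) (h : u ∈ descendants p v)
    (huv : u ≠ v) : #(descendants p u) < #(descendants p v) := by
  refine card_lt_card ((ssubset_iff_of_subset (descendants_subset_descendants h)).2
    ⟨v, self_mem_descendants p v, fun hv => huv ?_⟩)
  obtain ⟨j, hj⟩ := mem_descendants.1 h
  obtain ⟨k, hk⟩ := mem_descendants.1 hv
  exact hp.iterate_antisymm hj hk

theorem card_descendants_lt_card_descendants_map (hp : IsParentMap p c) (hv : v ≠ c) :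
    #(descendants p v) < #(descendants p (p v)) :=
  hp.card_descendants_lt_of_mem (mem_descendants.2 ⟨1, rfl⟩) (hp.map_ne_self hv).symm

theorem lt_card_descendants_iterate (hp : IsParentMap p c) (h : p^[k] v ≠ c) :
    k < #(descendants p (p^[k] v)) := by
  induction k with
  | zero => exact card_descendants_pos p v
  | succ k ih =>
    rw [Function.iterate_succ_apply'] at h ⊢
    have hk : p^[k] v ≠ c := hp.ne_root_of_iterate_ne_root (k := 1) h
    exact (Nat.succ_le_of_lt (ih hk)).trans_lt (hp.card_descendants_lt_card_descendants_map hk)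

theorem eq_of_mem_descendants_of_mem_descendants (hp : IsParentMap p c) (hu : u ≠ c) (hv : v ≠ c)
    (huv : p u = p v) (hwu : w ∈ descendants p u) (hwv : w ∈ descendants p v) : u = v := by
  obtain ⟨j, rfl⟩ := mem_descendants.1 hwu
  obtain ⟨k, rfl⟩ := mem_descendants.1 hwv
  wlog hjk : j ≤ k generalizing j k
  · exact (this k hv hwv j hu hwu huv.symm (le_of_not_ge hjk)).symm
  obtain ⟨i, rfl⟩ := Nat.exists_eq_add_of_le' hjk
  cases i with
  | zero => rw [Nat.zero_add]
  | succ i =>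
    have hup : p^[i] (p (p^[i + 1 + j] w)) = p^[i + 1 + j] w := by
      rw [← huv, ← Function.iterate_succ_apply, ← Function.iterate_add_apply]
    exact absurd (mem_descendants.2 ⟨i, hup⟩) (hp.map_notMem_descendants hv)

theorem card_descendants_add_card_descendants_lt (hp : IsParentMap p c) (hu : u ≠ c)
    (hv : v ≠ c) (huv : u ≠ v) (hpuv : p u = p v) :
    #(descendants p u) + #(descendants p v) < #(descendants p (p u)) := by
  have hdisj : Disjoint (descendants p u) (descendants p v) := disjoint_left.2 fun w hwu hwv =>
    huv (hp.eq_of_mem_descendants_of_mem_descendants hu hv hpuv hwu hwv)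
  rw [← card_union_of_disjoint hdisj]
  refine card_lt_card ((ssubset_iff_of_subset (union_subset ?_ ?_)).2
    ⟨p u, self_mem_descendants p _, ?_⟩)
  · exact descendants_subset_descendants (mem_descendants.2 ⟨1, rfl⟩)
  · exact descendants_subset_descendants (mem_descendants.2 ⟨1, hpuv.symm⟩)
  · rw [mem_union, not_or]
    exact ⟨hp.map_notMem_descendants hu, hpuv ▸ hp.map_notMem_descendants hv⟩

theorem exists_mem_level_one_iterate_eq (hp : IsParentMap p c) (hv : v ≠ c) :
    ∃ l ∈ level p c 1, ∃ k, p^[k] l = v := by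
  induction hd : #(descendants p v) using Nat.strong_induction_on generalizing v with
  | _ d ih =>
  by_cases hleaf : #(descendants p v) = 1
  · exact ⟨v, mem_level.2 ⟨hv, hleaf⟩, 0, rfl⟩
  · have hcard : 1 < #(descendants p v) :=
      lt_of_le_of_ne (card_descendants_pos p v) (Ne.symm hleaf)
    obtain ⟨u, hu, huv⟩ := exists_mem_ne hcard v
    obtain ⟨j, rfl⟩ := mem_descendants.1 hu
    obtain ⟨l, hl, k, rfl⟩ := ih _ (hd ▸ hp.card_descendants_lt_of_mem hu huv)
      (hp.ne_root_of_iterate_ne_root hv) rfl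
    exact ⟨l, hl, j + k, Function.iterate_add_apply p j k l⟩

theorem surjective_iterate_level_one [Nontrivial V] (hp : IsParentMap p c) :
    Function.Surjective fun x : level p c 1 × ℕ => p^[x.2] (x.1 : V) := by
  intro v
  by_cases hv : v = c
  · obtain ⟨u, hu⟩ := exists_ne c
    obtain ⟨l, hl, -⟩ := hp.exists_mem_level_one_iterate_eq hu
    obtain ⟨k, hk⟩ := hp.exists_iterate_eq_root l
    exact ⟨(⟨l, hl⟩, k), hk.trans hv.symm⟩
  · obtain ⟨l, hl, k, hk⟩ := hp.exists_mem_level_one_iterate_eq hv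
    exact ⟨(⟨l, hl⟩, k), hk⟩

theorem eq_of_iterate_mem_level_one (hp : IsParentMap p c) (h : p^[k] v ∈ level p c 1) :
    v = p^[k] v := by
  by_contra hne
  have hlt := hp.card_descendants_lt_of_mem (mem_descendants.2 ⟨k, rfl⟩) hne
  rw [(mem_level.1 h).2, Nat.lt_one_iff] at hlt
  exact (card_descendants_pos p v).ne' hlt

theorem light_subset_image_iterate (hp : IsParentMap p c) (m : ℕ) :
    light p c m ⊆ (level p c 1 ×ˢ range m).image fun x => p^[x.2] x.1 := by
  intro v hv
  obtain ⟨hvc, hvm⟩ := mem_light.1 hv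
  obtain ⟨l, hl, k, rfl⟩ := hp.exists_mem_level_one_iterate_eq hvc
  have hkm : k < m := (hp.lt_card_descendants_iterate hvc).trans_le hvm
  exact mem_image.2 ⟨(l, k), mk_mem_product hl (mem_range.2 hkm), rfl⟩

theorem card_light_le (hp : IsParentMap p c) (m : ℕ) :
    #(light p c m) ≤ #(level p c 1) * m :=
  calc #(light p c m) ≤ #((level p c 1 ×ˢ range m).image fun x => p^[x.2] x.1) :=
        card_le_card (hp.light_subset_image_iterate m)
    _ ≤ #(level p c 1 ×ˢ range m) := card_image_le
    _ = #(level p c 1) * m := by rw [card_product, card_range]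

-- Two children of a non-root vertex would have fewer than `m` descendants each, and the leaf
-- chains below them would give their common parent twice.
theorem isStarlike_of_le_card_light (hp : IsParentMap p c)
    (hlight : #(level p c 1) * m ≤ #(light p c m))
    (hm : ∀ v ≠ c, #(descendants p v) ≤ m + 1) : IsStarlike p c := by
  have hinj : Set.InjOn (fun x : V × ℕ => p^[x.2] x.1) (level p c 1 ×ˢ range m : Finset _) := by
    refine card_image_iff.1 (card_image_le.antisymm ?_)
    rw [card_product, card_range]
    exact hlight.trans (card_le_card (hp.light_subset_image_iterate m))
  intro u hu v hv huv
  by_contra hne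
  have huc : u ≠ c := hp.ne_root_of_iterate_ne_root (k := 1) hu
  have hvc : v ≠ c := hp.ne_root_of_iterate_ne_root (k := 1) hv
  have hsum := hp.card_descendants_add_card_descendants_lt huc hvc hne huv
  have hparent := hm (p u) hu
  obtain ⟨l, hl, j, rfl⟩ := hp.exists_mem_level_one_iterate_eq huc
  obtain ⟨l', hl', k, rfl⟩ := hp.exists_mem_level_one_iterate_eq hvc
  have hj := hp.lt_card_descendants_iterate huc
  have hk := hp.lt_card_descendants_iterate hvc
  have hpair : (l, j + 1) = (l', k + 1) := by
    refine hinj ?_ ?_ ?_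
    · exact mk_mem_product hl (mem_range.2 (by omega))
    · exact mk_mem_product hl' (mem_range.2 (by omega))
    · simpa only [Function.iterate_succ_apply'] using huv
  simp only [Prod.mk.injEq, add_left_inj] at hpair
  exact hne (by rw [hpair.1, hpair.2])

end Descendants

end IsParentMap

/-! ### Edge division vectors of rooted trees -/

theorem parentGraph_adj {p : V → V} {u v : V} :
    (parentGraph p).Adj u v ↔ u ≠ v ∧ (p u = v ∨ p v = u) :=
  SimpleGraph.fromRel_adj _ u v

theorem nonempty_parentGraph_iso_of_semiconj {p : V → V} {p' : W → W} (φ : V ≃ W)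
    (hφ : Function.Semiconj φ p p') : Nonempty (parentGraph p ≃g parentGraph p') :=
  ⟨φ, fun {u v} => by simp only [parentGraph_adj, ← hφ.eq, φ.injective.eq_iff, ne_eq]⟩

theorem reachable_parentGraph_iterate (p : V → V) (v : V) (k : ℕ) :
    (parentGraph p).Reachable v (p^[k] v) := by
  induction k with
  | zero => rfl
  | succ k ih =>
    rw [Function.iterate_succ_apply']
    refine ih.trans ?_
    by_cases h : p^[k] v = p (p^[k] v)
    · exact h ▸ .rfl
    · exact (parentGraph_adj.2 ⟨h, Or.inl rfl⟩).reachable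

theorem eq_of_parentGraph_adj_of_mem_descendants [Fintype V] {p : V → V} {u v w : V}
    (hu : u ∈ descendants p v) (hw : w ∉ descendants p v) (huw : (parentGraph p).Adj u w) :
    u = v ∧ w = p v := by
  obtain ⟨k, hk⟩ := mem_descendants.1 hu
  obtain rfl | rfl := (parentGraph_adj.1 huw).2
  · cases k with
    | zero => exact ⟨hk, congrArg p hk⟩
    | succ k => exact absurd (mem_descendants.2 ⟨k, hk⟩) hw
  · exact absurd (mem_descendants.2 ⟨k + 1, hk⟩) hw

namespace IsParentMap

variable {p : V → V} {c v w : V} {e : Sym2 V}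

theorem connected_parentGraph (hp : IsParentMap p c) : (parentGraph p).Connected := by
  have hroot (v : V) : (parentGraph p).Reachable v c := by
    obtain ⟨k, hk⟩ := hp.exists_iterate_eq_root v
    exact hk ▸ reachable_parentGraph_iterate p v k
  have : Nonempty V := ⟨c⟩
  exact ⟨fun u v => (hroot u).trans (hroot v).symm⟩

theorem parentGraph_adj_map (hp : IsParentMap p c) (hv : v ≠ c) : (parentGraph p).Adj v (p v) :=
  parentGraph_adj.2 ⟨(hp.map_ne_self hv).symm, Or.inl rfl⟩

theorem mem_edgeSet_parentGraph (hp : IsParentMap p c) :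
    e ∈ (parentGraph p).edgeSet ↔ ∃ v ≠ c, s(v, p v) = e := by
  have hroot {x y : V} (hxy : x ≠ y) (h : p x = y) : x ≠ c := by
    rintro rfl
    exact hxy (hp.map_root.symm.trans h)
  constructor
  · induction e with
    | _ x y =>
    intro (h : (parentGraph p).Adj x y)
    obtain ⟨hxy, rfl | rfl⟩ := parentGraph_adj.1 h
    · exact ⟨x, hroot hxy rfl, rfl⟩
    · exact ⟨y, hroot hxy.symm rfl, Sym2.eq_swap⟩
  · rintro ⟨v, hv, rfl⟩
    exact hp.parentGraph_adj_map hv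

theorem injective_sym2_mk_map (hp : IsParentMap p c) : Function.Injective fun v => s(v, p v) := by
  intro u v h
  obtain ⟨huv, -⟩ | ⟨huv, hvu⟩ := Sym2.eq_iff.1 h
  · exact huv
  · exact hp.iterate_antisymm (j := 1) (k := 1) hvu huv.symm

variable [Fintype V]

theorem dist_lt_dist_map (hp : IsParentMap p c) (hv : v ≠ c) (hw : w ∈ descendants p v) :
    (parentGraph p).dist w v < (parentGraph p).dist w (p v) :=
  dist_lt_dist_of_forall_adj_eq hp.connected_parentGraph (S := descendants p v)
    (fun _ hx _ hy hxy => (eq_of_parentGraph_adj_of_mem_descendants hx hy hxy).1) hw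
    (hp.map_notMem_descendants hv)

theorem dist_map_lt_dist (hp : IsParentMap p c) (hw : w ∉ descendants p v) :
    (parentGraph p).dist w (p v) < (parentGraph p).dist w v :=
  dist_lt_dist_of_forall_adj_eq hp.connected_parentGraph (S := {u | u ∉ descendants p v})
    (fun _ hx _ hy hxy =>
      (eq_of_parentGraph_adj_of_mem_descendants (not_not.1 hy) hx hxy.symm).2) hw
    (not_not_intro (self_mem_descendants p v))

theorem side_self_map (hp : IsParentMap p c) (hv : v ≠ c) :
    side (parentGraph p) v (p v) = #(descendants p v) :=
  congrArg card <| Finset.ext fun w => by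
    rw [mem_filter_univ]
    exact ⟨not_imp_not.1 fun hw => (hp.dist_map_lt_dist hw).not_gt, hp.dist_lt_dist_map hv⟩

theorem side_map_self (hp : IsParentMap p c) (hv : v ≠ c) :
    side (parentGraph p) (p v) v = #(descendants p v)ᶜ :=
  congrArg card <| Finset.ext fun w => by
    rw [mem_filter_univ, mem_compl]
    exact ⟨fun h hw => (hp.dist_lt_dist_map hv hw).not_gt h, hp.dist_map_lt_dist⟩

-- Every non-root vertex lies below a child of the root, so the children of the root suffice.
theorem isCentroidal_parentGraph_iff (hp : IsParentMap p c) :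
    IsCentroidal (parentGraph p) c ↔ ∀ v ≠ c, 2 * #(descendants p v) ≤ Fintype.card V := by
  have hchild (v : V) (hv : v ≠ c) (hpv : p v = c) :
      Fintype.card V ≤ 2 * side (parentGraph p) c v ↔
        2 * #(descendants p v) ≤ Fintype.card V := by
    have hside := hp.side_map_self hv
    have hcard := card_add_card_compl (descendants p v)
    rw [hpv] at hside
    omega
  constructor
  · intro hc v hv
    obtain ⟨k, hk⟩ := hp.exists_iterate_eq_root v
    induction k generalizing v with
    | zero => exact absurd hk hv
    | succ k ih =>
      by_cases hpv : p v = c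
      · exact (hchild v hv hpv).1 (hc v (hpv ▸ (hp.parentGraph_adj_map hv).symm))
      · have hlt := hp.card_descendants_lt_card_descendants_map hv
        have hle := ih (p v) hpv hk
        omega
  · intro hc v hcv
    have hpv : p v = c := (parentGraph_adj.1 hcv).2.resolve_left fun h =>
      hcv.ne (hp.map_root.symm.trans h)
    exact (hchild v hcv.ne' hpv).2 (hc v hcv.ne')

theorem muE_parentGraph (hp : IsParentMap p c) (hc : IsCentroidal (parentGraph p) c)
    (hv : v ≠ c) : muE (parentGraph p) s(v, p v) = #(descendants p v) := by
  have hle := hp.isCentroidal_parentGraph_iff.1 hc v hv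
  have hcard := card_add_card_compl (descendants p v)
  change min (side _ _ _) (side _ _ _) = _
  rw [hp.side_self_map hv, hp.side_map_self hv]
  omega

theorem r_parentGraph (hp : IsParentMap p c) (hc : IsCentroidal (parentGraph p) c) (i : ℕ) :
    r (parentGraph p) i = #(level p c i) := by
  rw [r, ← card_image_of_injective (level p c i) hp.injective_sym2_mk_map]
  congr 1
  ext e
  simp only [mem_filter_univ, mem_image, mem_level, hp.mem_edgeSet_parentGraph]
  constructor
  · rintro ⟨⟨v, hv, rfl⟩, hi⟩
    exact ⟨v, ⟨hv, hp.muE_parentGraph hc hv ▸ hi⟩, rfl⟩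
  · rintro ⟨v, ⟨hv, hi⟩, rfl⟩
    exact ⟨⟨v, hv, rfl⟩, (hp.muE_parentGraph hc hv).trans hi⟩

theorem tailSum_parentGraph (hp : IsParentMap p c) (hc : IsCentroidal (parentGraph p) c)
    (k : ℕ) : tailSum (parentGraph p) (Fintype.card V) k = #(heavy p c k) := by
  have hmaps : Set.MapsTo (fun v => #(descendants p v)) (heavy p c k)
      (Icc k (Fintype.card V / 2)) := by
    intro v hv
    obtain ⟨hvc, hk⟩ := mem_heavy.1 hv
    have hle := hp.isCentroidal_parentGraph_iff.1 hc v hvc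
    exact mem_Icc.2 ⟨hk, (Nat.le_div_iff_mul_le two_pos).2 (mul_comm 2 _ ▸ hle)⟩
  rw [tailSum, card_eq_sum_card_fiberwise hmaps]
  refine sum_congr rfl fun i hi => ?_
  rw [hp.r_parentGraph hc]
  congr 1
  ext v
  have hki := (mem_Icc.1 hi).1
  simp only [mem_filter, mem_level, mem_heavy]
  constructor
  · rintro ⟨hv, rfl⟩
    exact ⟨⟨hv, hki⟩, rfl⟩
  · rintro ⟨⟨hv, -⟩, hvi⟩
    exact ⟨hv, hvi⟩

theorem card_level_one_le_card_filter_deg_eq_one (hp : IsParentMap p c) :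
    #(level p c 1) ≤ #{v | deg (parentGraph p) v = 1} := by
  refine card_le_card fun v hv => mem_filter_univ v |>.2 (card_eq_one.2 ⟨p v, ?_⟩)
  ext w
  rw [mem_filter_univ, mem_singleton]
  constructor
  · intro hvw
    refine ((parentGraph_adj.1 hvw).2.resolve_right ?_).symm
    rintro rfl
    exact hvw.ne' (hp.eq_of_iterate_mem_level_one (k := 1) hv)
  · rintro rfl
    exact hp.parentGraph_adj_map (mem_level.1 hv).1

end IsParentMap

theorem exists_isParentMap_of_isTree {G : SimpleGraph V} (hG : G.IsTree) (c : V) :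
    ∃ p, IsParentMap p c ∧ parentGraph p = G := by
  choose P hP hunique using fun v => hG.existsUnique_path v c
  have hroot : P c = .nil := (hunique c _ .nil).symm
  have hsnd : (P c).snd = c := by rw [hroot, SimpleGraph.Walk.snd, SimpleGraph.Walk.getVert_nil]
  have hnil {v : V} (hv : v ≠ c) : ¬ (P v).Nil := SimpleGraph.Walk.not_nil_of_ne hv
  refine ⟨fun v => (P v).snd, ⟨hsnd, fun v => ⟨(P v).length, ?_⟩⟩, ?_⟩
  · induction hk : (P v).length generalizing v with
    | zero => exact SimpleGraph.Walk.eq_of_length_eq_zero hk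
    | succ k ih =>
      have hv : v ≠ c := by
        rintro rfl
        simp [hroot] at hk
      refine ih (P v).snd ?_
      rw [← hunique _ _ (hP v).tail, ← Nat.add_left_inj (n := 1), ← hk]
      exact SimpleGraph.Walk.length_tail_add_one (hnil hv)
  · have hadj {v : V} (hv : v ≠ (P v).snd) : G.Adj v (P v).snd :=
      (P v).adj_snd <| hnil fun h => hv (h ▸ hsnd.symm)
    ext u v
    rw [parentGraph_adj]
    constructor
    · rintro ⟨huv, rfl | rfl⟩
      · exact hadj huv
      · exact (hadj huv.symm).symm
    · intro huv
      refine ⟨huv.ne, ?_⟩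
      by_cases hv : v ∈ (P u).support
      · exact Or.inl (hG.isAcyclic.eq_snd_of_adj_start (hP u) huv hv).symm
      · refine Or.inr ?_
        rw [← hunique v _ ((hP u).cons (h := huv.symm) hv), SimpleGraph.Walk.snd_cons]

/-! ### Starlike trees -/

namespace IsStarlike

variable {p : V → V} {c u v l l' : V} {j k m : ℕ}

theorem eq_of_iterate_eq (hs : IsStarlike p c) (hp : IsParentMap p c) (h : p^[k] u = p^[k] v)
    (hk : p^[k] u ≠ c) : u = v := by
  induction k with
  | zero => exact h
  | succ k ih =>
    simp only [Function.iterate_succ_apply'] at h hk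
    exact ih (hs hk (h ▸ hk : p (p^[k] v) ≠ c) h) (hp.ne_root_of_iterate_ne_root (k := 1) hk)

variable [Fintype V]

theorem card_descendants_iterate (hs : IsStarlike p c) (hp : IsParentMap p c)
    (hl : l ∈ level p c 1) (hk : p^[k] l ≠ c) : #(descendants p (p^[k] l)) = k + 1 := by
  refine le_antisymm ?_ (hp.lt_card_descendants_iterate hk)
  have hsub : descendants p (p^[k] l) ⊆ (range (k + 1)).image fun i => p^[i] l := by
    intro w hw
    obtain ⟨j, hj⟩ := mem_descendants.1 hw
    refine mem_image.2 ?_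
    obtain hjk | hkj := le_total j k
    · refine ⟨k - j, mem_range.2 (by omega), (hs.eq_of_iterate_eq hp (k := j) ?_ (hj ▸ hk)).symm⟩
      rw [hj, ← Function.iterate_add_apply, Nat.add_sub_cancel' hjk]
    · refine ⟨0, mem_range.2 k.succ_pos, ?_⟩
      have hjw : p^[j - k] w = l := by
        refine (hs.eq_of_iterate_eq hp (k := k) ?_ hk).symm
        rw [← hj, ← Function.iterate_add_apply, Nat.add_sub_cancel' hkj]
      rw [Function.iterate_zero_apply, ← hjw]
      exact (hp.eq_of_iterate_mem_level_one (hjw ▸ hl)).symm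
  calc #(descendants p (p^[k] l)) ≤ #((range (k + 1)).image fun i => p^[i] l) := card_le_card hsub
    _ ≤ #(range (k + 1)) := card_image_le
    _ = k + 1 := card_range _

theorem lt_card_descendants_iff (hs : IsStarlike p c) (hp : IsParentMap p c) (hv : v ≠ c) :
    m < #(descendants p v) ↔ ∃ w, p^[m] w = v := by
  constructor
  · obtain ⟨l, hl, k, rfl⟩ := hp.exists_mem_level_one_iterate_eq hv
    rw [hs.card_descendants_iterate hp hl hv, Nat.lt_succ_iff]
    intro hmk
    exact ⟨p^[k - m] l, by rw [← Function.iterate_add_apply, Nat.add_sub_cancel' hmk]⟩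
  · rintro ⟨w, rfl⟩
    exact hp.lt_card_descendants_iterate hv

theorem card_heavy_succ (hs : IsStarlike p c) (hp : IsParentMap p c) (m : ℕ) :
    #(heavy p c (m + 1)) = #{w | p^[m] w ≠ c} := by
  have hinj : Set.InjOn p^[m] ({w | p^[m] w ≠ c} : Finset V) := fun u hu v _ huv =>
    hs.eq_of_iterate_eq hp huv (mem_filter_univ u |>.1 hu)
  rw [← card_image_of_injOn hinj]
  congr 1
  ext v
  simp only [mem_heavy, Nat.succ_le_iff, mem_image, mem_filter_univ]
  constructor
  · rintro ⟨hv, hm⟩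
    obtain ⟨w, rfl⟩ := (hs.lt_card_descendants_iff hp hv).1 hm
    exact ⟨w, hv, rfl⟩
  · rintro ⟨w, hw, rfl⟩
    exact ⟨hw, hp.lt_card_descendants_iterate hw⟩

theorem card_level_succ (hs : IsStarlike p c) (hp : IsParentMap p c) (k : ℕ) :
    #(level p c (k + 1)) = #{l ∈ level p c 1 | k + 1 ≤ depth p c l} := by
  have hdepth (l : V) : k + 1 ≤ depth p c l ↔ p^[k] l ≠ c := by
    rw [Nat.succ_le_iff, ← not_le, hp.depth_le_iff]
  simp only [hdepth]
  have hinj : Set.InjOn p^[k] ({l ∈ level p c 1 | p^[k] l ≠ c} : Finset V) := fun u hu v _ huv =>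
    hs.eq_of_iterate_eq hp huv (mem_filter.1 hu).2
  rw [← card_image_of_injOn hinj]
  congr 1
  ext v
  rw [mem_level, mem_image]
  constructor
  · rintro ⟨hv, hk⟩
    obtain ⟨l, hl, j, rfl⟩ := hp.exists_mem_level_one_iterate_eq hv
    obtain rfl : j = k := by simpa [hs.card_descendants_iterate hp hl hv] using hk
    exact ⟨l, mem_filter.2 ⟨hl, hv⟩, rfl⟩
  · rintro ⟨l, hl, rfl⟩
    obtain ⟨hl, hk⟩ := mem_filter.1 hl
    exact ⟨hk, hs.card_descendants_iterate hp hl hk⟩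

theorem iterate_eq_iterate_iff (hs : IsStarlike p c) (hp : IsParentMap p c)
    (hl : l ∈ level p c 1) (hl' : l' ∈ level p c 1) :
    p^[j] l = p^[k] l' ↔ l = l' ∧ j = k ∨ depth p c l ≤ j ∧ depth p c l' ≤ k := by
  rw [hp.depth_le_iff, hp.depth_le_iff]
  constructor
  · intro h
    by_cases hj : p^[j] l = c
    · exact Or.inr ⟨hj, h ▸ hj⟩
    · have hcard := hs.card_descendants_iterate hp hl hj
      rw [h, hs.card_descendants_iterate hp hl' (h ▸ hj), Nat.succ_inj] at hcard
      subst hcard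
      exact Or.inl ⟨hs.eq_of_iterate_eq hp h hj, rfl⟩
  · rintro (⟨rfl, rfl⟩ | ⟨hj, hk⟩)
    · rfl
    · rw [hj, hk]

end IsStarlike

-- Match the branches by length: the number of branches of length at least `k` is read off the
-- number of vertices with exactly `k` descendants.
theorem IsStarlike.nonempty_parentGraph_iso [Fintype V] [Fintype W] [Nontrivial V] [Nontrivial W]
    {p : V → V} {p' : W → W} {c : V} {c' : W} (hs : IsStarlike p c) (hp : IsParentMap p c)
    (hs' : IsStarlike p' c') (hp' : IsParentMap p' c')
    (h : ∀ k, #(heavy p c (k + 1)) = #(heavy p' c' (k + 1))) :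
    Nonempty (parentGraph p ≃g parentGraph p') := by
  have hlevel (k : ℕ) : #(level p c (k + 1)) = #(level p' c' (k + 1)) := by
    have hc := card_level_add_card_heavy p c (k + 1)
    have hc' := card_level_add_card_heavy p' c' (k + 1)
    have hk := h k
    have hk' := h (k + 1)
    omega
  have hbranch (k : ℕ) :
      #{l ∈ level p c 1 | k ≤ depth p c l} = #{l ∈ level p' c' 1 | k ≤ depth p' c' l} := by
    cases k with
    | zero => simpa only [Nat.zero_le, filter_true] using hlevel 0
    | succ k => rw [← hs.card_level_succ hp, ← hs'.card_level_succ hp', hlevel]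
  obtain ⟨e, he⟩ := exists_equiv_of_card_filter_le_eq hbranch
  obtain ⟨φ, hφ⟩ := exists_equiv_of_surjective_of_eq_iff_eq hp.surjective_iterate_level_one
    (g := fun x : level p c 1 × ℕ => p'^[x.2] (e x.1 : W))
    (hp'.surjective_iterate_level_one.comp (e.prodCongr (Equiv.refl ℕ)).surjective)
    fun x y => by
      rw [hs.iterate_eq_iterate_iff hp x.1.2 y.1.2,
        hs'.iterate_eq_iterate_iff hp' (e x.1).2 (e y.1).2, he, he, SetCoe.ext_iff, SetCoe.ext_iff,
        e.injective.eq_iff]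
  refine nonempty_parentGraph_iso_of_semiconj φ fun v => ?_
  obtain ⟨⟨l, k⟩, rfl⟩ := hp.surjective_iterate_level_one v
  have hk : φ (p^[k] l) = p'^[k] (e l) := hφ (l, k)
  have hksucc : φ (p^[k + 1] l) = p'^[k + 1] (e l) := hφ (l, k + 1)
  rw [Function.iterate_succ_apply', Function.iterate_succ_apply', ← hk] at hksucc
  exact hksucc

/-! ### The balanced starlike tree as a rooted tree -/

/-- The parent map of `balancedStar n q` with root `0`. Truncated subtraction sends the root and
the first vertices `1, …, q` of the branches to the root. -/
def starParent (n q : ℕ) (j : Fin n) : Fin n :=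
  ⟨j - q, (Nat.sub_le _ _).trans_lt j.2⟩

section Star

variable {n q : ℕ}

theorem val_starParent (j : Fin n) : (starParent n q j : ℕ) = j - q :=
  rfl

theorem balancedStar_eq_parentGraph (hq : 0 < q) :
    balancedStar n q = parentGraph (starParent n q) := by
  ext x y
  simp only [balancedStar, parentGraph, SimpleGraph.fromRel_adj, Fin.ext_iff, val_starParent]
  omega

theorem val_iterate_starParent (k : ℕ) (j : Fin n) :
    ((starParent n q)^[k] j : ℕ) = j - k * q := by
  induction k with
  | zero => simp
  | succ k ih => rw [Function.iterate_succ_apply', val_starParent, ih, Nat.sub_sub, Nat.succ_mul]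

variable [NeZero n]

theorem iterate_starParent_eq_zero_iff (k : ℕ) (j : Fin n) :
    (starParent n q)^[k] j = 0 ↔ j ≤ k * q := by
  rw [Fin.ext_iff, val_iterate_starParent, Fin.val_zero, Nat.sub_eq_zero_iff_le]

theorem isParentMap_starParent (hq : 0 < q) : IsParentMap (starParent n q) 0 where
  map_root := (iterate_starParent_eq_zero_iff 1 0).2 (Nat.zero_le _)
  exists_iterate_eq_root j :=
    ⟨j, (iterate_starParent_eq_zero_iff j j).2 (Nat.le_mul_of_pos_right _ hq)⟩

theorem isStarlike_starParent : IsStarlike (starParent n q) 0 := by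
  intro i hi j _ hij
  have hi' : (starParent n q i : ℕ) ≠ 0 := Fin.val_ne_of_ne hi
  have hij' := congrArg Fin.val hij
  rw [val_starParent] at hi'
  rw [val_starParent, val_starParent] at hij'
  exact Fin.ext (by omega)

theorem card_heavy_starParent (hq : 0 < q) (m : ℕ) :
    #(heavy (starParent n q) 0 (m + 1)) = n - 1 - m * q := by
  rw [isStarlike_starParent.card_heavy_succ (isParentMap_starParent hq)]
  simp only [ne_eq, iterate_starParent_eq_zero_iff, ← Nat.lt_add_one_iff]
  have hcompl := card_filter_add_card_filter_not (s := univ) fun j : Fin n => (j : ℕ) < m * q + 1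
  rw [Fin.card_filter_val_lt, card_univ, Fintype.card_fin] at hcompl
  omega

theorem isCentroidal_balancedStar (hq : 2 ≤ q) : IsCentroidal (balancedStar n q) 0 := by
  have hp : IsParentMap (starParent n q) 0 := isParentMap_starParent (by omega)
  rw [balancedStar_eq_parentGraph (by omega), hp.isCentroidal_parentGraph_iff, Fintype.card_fin]
  intro v hv
  by_contra! h
  obtain ⟨w, rfl⟩ := (isStarlike_starParent.lt_card_descendants_iff hp hv).1
    (by omega : n / 2 < #(descendants (starParent n q) v))
  rw [ne_eq, iterate_starParent_eq_zero_iff] at hv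
  have hmul := Nat.mul_le_mul_left (n / 2) hq
  omega

theorem tailSum_balancedStar (hq : 2 ≤ q) (m : ℕ) :
    tailSum (balancedStar n q) n (m + 1) = n - 1 - m * q := by
  have hp : IsParentMap (starParent n q) 0 := isParentMap_starParent (by omega)
  have hc := isCentroidal_balancedStar (n := n) hq
  rw [balancedStar_eq_parentGraph (by omega)] at hc ⊢
  have htail := hp.tailSum_parentGraph hc (m + 1)
  rwa [Fintype.card_fin, card_heavy_starParent (by omega)] at htail

end Star

/-! ### Comparison with the balanced starlike tree -/

section Comparison

variable [Fintype V] {p : V → V} {c : V} {q : ℕ}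

theorem IsParentMap.preceq_balancedStar [Nonempty V] (hp : IsParentMap p c)
    (hc : IsCentroidal (parentGraph p) c) (hq : 2 ≤ q) (hleaves : #(level p c 1) ≤ q) :
    Preceq (Fintype.card V) (balancedStar (Fintype.card V) q) (parentGraph p) := by
  intro k hk _
  obtain ⟨m, rfl⟩ := Nat.exists_eq_add_of_le' hk
  have hlight := (hp.card_light_le m).trans (Nat.mul_le_mul_right m hleaves)
  have hcompl := card_heavy_add_card_light p c m
  rw [tailSum_balancedStar hq, hp.tailSum_parentGraph hc, mul_comm]
  omega

theorem IsParentMap.isStarlike_of_card_heavy_eq (hp : IsParentMap p c) (hq : 0 < q)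
    (hleaves : #(level p c 1) ≤ q)
    (h : ∀ m, #(heavy p c (m + 1)) = Fintype.card V - 1 - m * q) : IsStarlike p c := by
  set m := (Fintype.card V - 1) / q
  have hm : m * q ≤ Fintype.card V - 1 := Nat.div_mul_le_self _ _
  have hm' : Fintype.card V - 1 < (m + 1) * q := Nat.lt_mul_of_div_lt (Nat.lt_succ_self m) hq
  refine hp.isStarlike_of_le_card_light (m := m) ?_ fun v hv => ?_
  · have hlight := card_heavy_add_card_light p c m
    have hheavy := h m
    have hle := Nat.mul_le_mul_right m hleaves
    rw [mul_comm q m] at hle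
    omega
  · by_contra! hlt
    have hpos : 0 < #(heavy p c (m + 1 + 1)) := card_pos.2 ⟨v, mem_heavy.2 ⟨hv, hlt⟩⟩
    have hheavy := h (m + 1)
    omega

theorem IsParentMap.nonempty_iso_balancedStar [Nontrivial V] (hp : IsParentMap p c)
    (hc : IsCentroidal (parentGraph p) c) (hq : 2 ≤ q) (hleaves : #(level p c 1) ≤ q)
    (h : SameEdgeDivision (Fintype.card V) (parentGraph p) (balancedStar (Fintype.card V) q)) :
    Nonempty (parentGraph p ≃g balancedStar (Fintype.card V) q) := by
  have hq' : 0 < q := by omega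
  have : Nontrivial (Fin (Fintype.card V)) := Fin.nontrivial_iff_two_le.2 Fintype.one_lt_card
  have hheavy (m : ℕ) : #(heavy p c (m + 1)) = Fintype.card V - 1 - m * q := by
    rw [← hp.tailSum_parentGraph hc, ← tailSum_balancedStar hq]
    refine sum_congr rfl fun i hi => h i ?_ (mem_Icc.1 hi).2
    exact m.succ_pos.trans_le (mem_Icc.1 hi).1
  rw [balancedStar_eq_parentGraph hq']
  refine (hp.isStarlike_of_card_heavy_eq hq' hleaves hheavy).nonempty_parentGraph_iso hp
    isStarlike_starParent (isParentMap_starParent hq') fun k => ?_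
  rw [hheavy, card_heavy_starParent hq']

end Comparison

end

theorem stmt17_general {V : Type*} [Fintype V] [Nontrivial V] (G : SimpleGraph V) (hT : G.IsTree)
    (q : ℕ) (hq : (Finset.univ.filter fun v => deg G v = 1).card = q) :
    Preceq (Fintype.card V) (balancedStar (Fintype.card V) q) G ∧
    (SameEdgeDivision (Fintype.card V) G (balancedStar (Fintype.card V) q) ↔
      Nonempty (G ≃g balancedStar (Fintype.card V) q)) := by
  have hq2 : 2 ≤ q := hq ▸ two_le_card_filter_deg_eq_one_of_isTree hT
  obtain ⟨c, hc⟩ := exists_isCentroidal hT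
  obtain ⟨p, hp, rfl⟩ := exists_isParentMap_of_isTree hT c
  have hleaves := hq ▸ hp.card_level_one_le_card_filter_deg_eq_one
  exact ⟨hp.preceq_balancedStar hc hq2 hleaves, hp.nonempty_iso_balancedStar hc hq2 hleaves,
    fun ⟨φ⟩ i _ _ => r_eq_of_iso φ i⟩

/-- Let `T` be a tree on `n` vertices with exactly `q` pendent vertices,
`2 < q < n − 1`. Then `T ⪰ SP_{n,q}`, and `r(T) = r(SP_{n,q})` iff `T` is isomorphic to
`SP_{n,q}`. -/
theorem stmt17 {V : Type*} [Fintype V] (G : SimpleGraph V) (hT : G.IsTree) (q : ℕ)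
    (hq : (Finset.univ.filter fun v => deg G v = 1).card = q)
    (hq2 : 2 < q) (hqn : q < Fintype.card V - 1) :
    Preceq (Fintype.card V) (balancedStar (Fintype.card V) q) G ∧
    (SameEdgeDivision (Fintype.card V) G (balancedStar (Fintype.card V) q) ↔
      Nonempty (G ≃g balancedStar (Fintype.card V) q)) := by
  have : Nontrivial V := Fintype.one_lt_card_iff_nontrivial.1 (by omega)
  exact stmt17_general G hT q hq

end TreeOrder
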